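/- Let N, D be positive integers, β > 0, ν > 0 and λ ≥ 0. Let z_1, …, z_N ∈ ℝ^D with all entries in {0,1}, and let B ⊆ {1,…,D} be a block of coordinates such that (i) each sample z_i has at most one nonzero coordinate with index in B, and (ii) for every j ∈ B, the number of samples i with z_{ij} = 1 is at most ν·N. Let L_1, …, L_N : ℝ → ℝ be differentiable functions satisfying L_i(b) ≤ L_i(a) + L_i'(a)·(b − a) + (β/2)·(b − a)² for all a, b ∈ ℝ, define Loss(w) = (1/N)∑_{i=1}^N L_i(⟨w, z_i⟩) and F(w) = λ‖w‖₁ + Loss(w). Let S_λ(t) = sign(t)·max(|t| − λ, 0). Then for every w ∈ ℝ^D with w_j = 0 for all j ∈ B, there exists η ∈ ℝ^D supported on B such that F(w + η) − F(w) ≤ −(1/(2βν))·∑_{j∈B} S_λ((∂Loss/∂w_j)(w))². -/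

import Mathlib

/-!
Since no sample meets the block `B` in more than one coordinate, the quadratic terms of the
smoothness bound carry no cross terms: along directions supported on `B` the loss is dominated by a
quadratic that is separable over the coordinates of `B`, with curvature `β * ν`. The iterate
vanishes on `B`, so the L1 norm separates there as well, and the resulting one-dimensional problems
are minimized by soft thresholding.
-/

open Finset

section SoftThreshold

/-- The soft-thresholding operator `S_λ`, which for `λ ≥ 0` is the proximal map of `λ |·|`. -/
noncomputable def softThreshold (lam t : ℝ) : ℝ :=
  Real.sign t * max (|t| - lam) 0

lemma real_sign_mul_self_eq_abs (t : ℝ) : Real.sign t * t = |t| := by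
  rcases lt_trichotomy t 0 with ht | rfl | ht
  · simp [Real.sign_of_neg ht, abs_of_neg ht]
  · simp
  · simp [Real.sign_of_pos ht, abs_of_pos ht]

lemma softThreshold_sq (lam t : ℝ) :
    softThreshold lam t ^ 2 = t * softThreshold lam t - lam * |softThreshold lam t| := by
  obtain rfl | ht := eq_or_ne t 0
  · simp [softThreshold]
  have abs_softThreshold : |softThreshold lam t| = max (|t| - lam) 0 := by
    rcases Real.sign_apply_eq_of_ne_zero t ht with h | h <;> simp [softThreshold, h]
  have mul_softThreshold : t * softThreshold lam t = |t| * max (|t| - lam) 0 := by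
    rw [softThreshold, ← mul_assoc, mul_comm t, real_sign_mul_self_eq_abs]
  have max_sq : max (|t| - lam) 0 ^ 2 = (|t| - lam) * max (|t| - lam) 0 := by
    rcases max_choice (|t| - lam) 0 with h | h <;> rw [h] <;> ring
  rw [← sq_abs, mul_softThreshold, abs_softThreshold, max_sq, sub_mul]

lemma l1_quadratic_neg_softThreshold_div {M : ℝ} (hM : 0 < M) (lam g : ℝ) :
    lam * |-softThreshold lam g / M| + (g * (-softThreshold lam g / M)
      + M / 2 * (-softThreshold lam g / M) ^ 2) = -(1 / (2 * M)) * softThreshold lam g ^ 2 := by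
  rw [abs_div, abs_neg, abs_of_pos hM]
  field_simp
  linear_combination 2 * softThreshold_sq lam g

end SoftThreshold

section L1Objective

variable {κ : Type*} [Fintype κ] {B : Finset κ}

/-- The objective `λ ‖w‖₁ + f w` of L1-regularized minimization of `f`. The norm is written as a
sum, since `κ → ℝ` carries the sup norm. -/
def l1Objective (lam : ℝ) (f : (κ → ℝ) → ℝ) (w : κ → ℝ) : ℝ :=
  lam * ∑ j, |w j| + f w

lemma sum_abs_add_of_disjoint_support {R : Type*} [AddCommGroup R] [Lattice R] [AddLeftMono R]
    {w η : κ → R} (hw : ∀ j ∈ B, w j = 0) (hη : ∀ j ∉ B, η j = 0) :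
    ∑ j, |(w + η) j| = ∑ j, |w j| + ∑ j ∈ B, |η j| := by
  have sum_abs_η : ∑ j ∈ B, |η j| = ∑ j, |η j| :=
    sum_subset (subset_univ B) fun j _ hj => by rw [hη j hj, abs_zero]
  rw [sum_abs_η, ← sum_add_distrib]
  refine sum_congr rfl fun j _ => ?_
  by_cases hj : j ∈ B
  · simp [hw j hj]
  · simp [hη j hj]

lemma exists_l1Objective_sub_le_of_separable_upper_bound {f : (κ → ℝ) → ℝ} {g : κ → ℝ} {M : ℝ}
    (hM : 0 < M) (lam : ℝ) {w : κ → ℝ} (hw : ∀ j ∈ B, w j = 0)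
    (hf : ∀ η : κ → ℝ, (∀ j ∉ B, η j = 0) →
      f (w + η) ≤ f w + ∑ j ∈ B, (g j * η j + M / 2 * η j ^ 2)) :
    ∃ η : κ → ℝ, (∀ j ∉ B, η j = 0) ∧
      l1Objective lam f (w + η) - l1Objective lam f w
        ≤ -(1 / (2 * M)) * ∑ j ∈ B, softThreshold lam (g j) ^ 2 := by
  classical
  let η : κ → ℝ := fun j => if j ∈ B then -softThreshold lam (g j) / M else 0
  have hη : ∀ j ∉ B, η j = 0 := fun j hj => if_neg hj
  refine ⟨η, hη, ?_⟩
  calc l1Objective lam f (w + η) - l1Objective lam f w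
      ≤ lam * ∑ j ∈ B, |η j| + ∑ j ∈ B, (g j * η j + M / 2 * η j ^ 2) := by
        rw [l1Objective, l1Objective, sum_abs_add_of_disjoint_support hw hη]
        linarith [hf η hη]
    _ = ∑ j ∈ B, (lam * |η j| + (g j * η j + M / 2 * η j ^ 2)) := by
        rw [mul_sum, ← sum_add_distrib]
    _ = ∑ j ∈ B, -(1 / (2 * M)) * softThreshold lam (g j) ^ 2 :=
        sum_congr rfl fun j hj => by
          simp only [η, if_pos hj, l1_quadratic_neg_softThreshold_div hM]
    _ = -(1 / (2 * M)) * ∑ j ∈ B, softThreshold lam (g j) ^ 2 := by rw [mul_sum]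

end L1Objective

section DotProduct

variable {κ R : Type*}

lemma sq_sum_eq_sum_sq_of_pairwise_mul_eq_zero [Semiring R] {s : Finset κ}
    {f : κ → R} (hf : (s : Set κ).Pairwise fun j k => f j * f k = 0) :
    (∑ j ∈ s, f j) ^ 2 = ∑ j ∈ s, f j ^ 2 := by
  rw [sq, sum_mul_sum]
  refine sum_congr rfl fun j hj => ?_
  rw [sq, sum_eq_single_of_mem j hj fun k hk hkj => hf hj hk hkj.symm]

variable [Fintype κ] {B : Finset κ}

lemma dotProduct_eq_sum_of_forall_notMem_eq_zero [NonUnitalNonAssocSemiring R]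
    {η : κ → R} (hη : ∀ j ∉ B, η j = 0) (x : κ → R) :
    η ⬝ᵥ x = ∑ j ∈ B, η j * x j :=
  (sum_subset (subset_univ B) fun j _ hj => by rw [hη j hj, zero_mul]).symm

lemma sq_dotProduct_eq_sum_of_card_ne_zero_le_one [CommSemiring R] [NoZeroDivisors R]
    [DecidableEq R] {η x : κ → R} (hη : ∀ j ∉ B, η j = 0) (hx : #{j ∈ B | x j ≠ 0} ≤ 1) :
    (η ⬝ᵥ x) ^ 2 = ∑ j ∈ B, (η j * x j) ^ 2 := by
  rw [dotProduct_eq_sum_of_forall_notMem_eq_zero hη]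
  refine sq_sum_eq_sum_sq_of_pairwise_mul_eq_zero fun j hj k hk hjk => ?_
  change η j * x j * (η k * x k) = 0
  have x_mul_x : x j * x k = 0 := by
    by_contra h
    obtain ⟨hxj, hxk⟩ := mul_ne_zero_iff.mp h
    exact hjk (card_le_one.mp hx j (mem_filter.mpr ⟨hj, hxj⟩) k (mem_filter.mpr ⟨hk, hxk⟩))
  rw [mul_mul_mul_comm, x_mul_x, mul_zero]

end DotProduct

section WeightedLoss

variable {ι κ : Type*} [Fintype ι] [Fintype κ]

/-- The loss of the linear predictor `w` on the samples `z i`, each weighted by `c i`. The empirical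
mean is the case of constant weights `1 / N`. -/
def weightedLoss (c : ι → ℝ) (L : ι → ℝ → ℝ) (z : ι → κ → ℝ) (w : κ → ℝ) : ℝ :=
  ∑ i, c i * L i (w ⬝ᵥ z i)

/-- The `j`-th coordinate of the slope of `weightedLoss` obtained by the chain rule from slopes
`L' i` of the sample losses. It is the partial derivative when `L' i` is the derivative of `L i`. -/
def weightedLossSlope (c : ι → ℝ) (L' : ι → ℝ → ℝ) (z : ι → κ → ℝ) (w : κ → ℝ) (j : κ) : ℝ :=
  ∑ i, c i * (L' i (w ⬝ᵥ z i) * z i j)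

variable {c : ι → ℝ} {L L' : ι → ℝ → ℝ} {z : ι → κ → ℝ} {β ν : ℝ} {B : Finset κ} {η : κ → ℝ}

lemma sum_weightedLossSlope_mul (hη : ∀ j ∉ B, η j = 0) (w : κ → ℝ) :
    ∑ j ∈ B, weightedLossSlope c L' z w j * η j = ∑ i, c i * (L' i (w ⬝ᵥ z i) * (η ⬝ᵥ z i)) := by
  simp only [weightedLossSlope, dotProduct_eq_sum_of_forall_notMem_eq_zero hη, mul_sum, sum_mul]
  rw [sum_comm]
  exact sum_congr rfl fun i _ => sum_congr rfl fun j _ => by ring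

lemma sum_mul_sq_dotProduct_le (hone : ∀ i, #{j ∈ B | z i j ≠ 0} ≤ 1)
    (hcol : ∀ j ∈ B, ∑ i, c i * z i j ^ 2 ≤ ν) (hη : ∀ j ∉ B, η j = 0) :
    ∑ i, c i * (η ⬝ᵥ z i) ^ 2 ≤ ν * ∑ j ∈ B, η j ^ 2 :=
  calc ∑ i, c i * (η ⬝ᵥ z i) ^ 2
      = ∑ i, ∑ j ∈ B, c i * (η j * z i j) ^ 2 := by
        simp only [sq_dotProduct_eq_sum_of_card_ne_zero_le_one hη (hone _), mul_sum]
    _ = ∑ j ∈ B, (∑ i, c i * z i j ^ 2) * η j ^ 2 := by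
        rw [sum_comm]
        simp only [sum_mul]
        exact sum_congr rfl fun j _ => sum_congr rfl fun i _ => by ring
    _ ≤ ∑ j ∈ B, ν * η j ^ 2 :=
        sum_le_sum fun j hj => mul_le_mul_of_nonneg_right (hcol j hj) (sq_nonneg _)
    _ = ν * ∑ j ∈ B, η j ^ 2 := by rw [mul_sum]

lemma weightedLoss_add_le (hc : ∀ i, 0 ≤ c i)
    (hL : ∀ i a b, L i b ≤ L i a + L' i a * (b - a) + β / 2 * (b - a) ^ 2) (w η : κ → ℝ) :
    weightedLoss c L z (w + η) ≤ weightedLoss c L z w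
      + ∑ i, c i * (L' i (w ⬝ᵥ z i) * (η ⬝ᵥ z i)) + β / 2 * ∑ i, c i * (η ⬝ᵥ z i) ^ 2 := by
  rw [weightedLoss, weightedLoss, mul_sum, ← sum_add_distrib, ← sum_add_distrib]
  refine sum_le_sum fun i _ => ?_
  have sample_bound := hL i (w ⬝ᵥ z i) ((w + η) ⬝ᵥ z i)
  rw [add_dotProduct, add_sub_cancel_left] at sample_bound
  rw [add_dotProduct]
  linarith [mul_le_mul_of_nonneg_left sample_bound (hc i)]

lemma weightedLoss_add_le_separable (hβ : 0 ≤ β) (hc : ∀ i, 0 ≤ c i)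
    (hL : ∀ i a b, L i b ≤ L i a + L' i a * (b - a) + β / 2 * (b - a) ^ 2)
    (hone : ∀ i, #{j ∈ B | z i j ≠ 0} ≤ 1) (hcol : ∀ j ∈ B, ∑ i, c i * z i j ^ 2 ≤ ν)
    (w : κ → ℝ) (hη : ∀ j ∉ B, η j = 0) :
    weightedLoss c L z (w + η) ≤ weightedLoss c L z w
      + ∑ j ∈ B, (weightedLossSlope c L' z w j * η j + β * ν / 2 * η j ^ 2) := by
  have curvature_le : β / 2 * ∑ i, c i * (η ⬝ᵥ z i) ^ 2 ≤ β / 2 * (ν * ∑ j ∈ B, η j ^ 2) := by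
    gcongr
    exact sum_mul_sq_dotProduct_le hone hcol hη
  rw [sum_add_distrib, ← mul_sum, sum_weightedLossSlope_mul hη]
  linarith [weightedLoss_add_le (z := z) hc hL w η]

theorem stmt_6_general (hβ : 0 < β) (hν : 0 < ν) (lam : ℝ) (hc : ∀ i, 0 ≤ c i)
    (hL : ∀ i a b, L i b ≤ L i a + L' i a * (b - a) + β / 2 * (b - a) ^ 2)
    (hone : ∀ i, #{j ∈ B | z i j ≠ 0} ≤ 1) (hcol : ∀ j ∈ B, ∑ i, c i * z i j ^ 2 ≤ ν)
    {w : κ → ℝ} (hw : ∀ j ∈ B, w j = 0) :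
    ∃ η : κ → ℝ, (∀ j ∉ B, η j = 0) ∧
      l1Objective lam (weightedLoss c L z) (w + η) - l1Objective lam (weightedLoss c L z) w
        ≤ -(1 / (2 * β * ν)) * ∑ j ∈ B, softThreshold lam (weightedLossSlope c L' z w j) ^ 2 := by
  rw [mul_assoc 2 β ν]
  exact exists_l1Objective_sub_le_of_separable_upper_bound (mul_pos hβ hν) lam hw fun η hη =>
    weightedLoss_add_le_separable hβ.le hc hL hone hcol w hη

end WeightedLoss

lemma sum_sq_eq_card_of_eq_zero_or_one {ι R : Type*} [Fintype ι] [Semiring R] [DecidableEq R]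
    {x : ι → R} (hx : ∀ i, x i = 0 ∨ x i = 1) : ∑ i, x i ^ 2 = #{i | x i = 1} := by
  nontriviality R
  rw [← sum_boole]
  refine sum_congr rfl fun i _ => ?_
  rcases hx i with h | h <;> simp [h]

open Finset in
/-- Per-iteration progress bound (inequality (13)) of Fully Corrective
Randomized Block Coordinate Descent: adding a fresh block `B` of Random
Binning features (on which the current iterate is zero) and minimizing over it
decreases the L1-regularized objective by at least
`(1/(2βν)) ∑_{j∈B} S_λ(∇_j Loss(w))²`. -/
theorem stmt_6 (N D : ℕ) (hN : 0 < N) (hD : 0 < D) (β ν lam : ℝ)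
    (hβ : 0 < β) (hν : 0 < ν) (hlam : 0 ≤ lam)
    (z : Fin N → Fin D → ℝ)
    (hz01 : ∀ i j, z i j = 0 ∨ z i j = 1)
    (B : Finset (Fin D))
    (hone : ∀ i, (B.filter (fun j => z i j ≠ 0)).card ≤ 1)
    (hcol : ∀ j ∈ B, ((univ.filter (fun i : Fin N => z i j = 1)).card : ℝ) ≤ ν * N)
    (L : Fin N → ℝ → ℝ)
    (hLdiff : ∀ i, Differentiable ℝ (L i))
    (hLsmooth : ∀ i a b, L i b ≤ L i a + deriv (L i) a * (b - a) + β / 2 * (b - a) ^ 2)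
    (Loss : (Fin D → ℝ) → ℝ)
    (hLoss : ∀ w, Loss w = (1 / (N : ℝ)) * ∑ i, L i (∑ j, w j * z i j))
    (grad : (Fin D → ℝ) → Fin D → ℝ)
    (hgrad : ∀ w j, grad w j = (1 / (N : ℝ)) * ∑ i, deriv (L i) (∑ j', w j' * z i j') * z i j)
    (F : (Fin D → ℝ) → ℝ)
    (hF : ∀ w, F w = lam * ∑ j, |w j| + Loss w)
    (S : ℝ → ℝ → ℝ) (hS : ∀ l t, S l t = Real.sign t * max (|t| - l) 0) :
    ∀ w : Fin D → ℝ, (∀ j ∈ B, w j = 0) →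
      ∃ η : Fin D → ℝ, (∀ j ∉ B, η j = 0) ∧
        F (w + η) - F w ≤ -(1 / (2 * β * ν)) * ∑ j ∈ B, (S lam (grad w j)) ^ 2 := by
  obtain rfl : S = softThreshold := funext₂ hS
  obtain rfl : Loss = weightedLoss (fun _ => 1 / (N : ℝ)) L z :=
    funext fun w => (hLoss w).trans (mul_sum ..)
  obtain rfl : grad = weightedLossSlope (fun _ => 1 / (N : ℝ)) (fun i => deriv (L i)) z :=
    funext₂ fun w j => (hgrad w j).trans (mul_sum ..)
  obtain rfl : F = l1Objective lam _ := funext hF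
  have mean_sq_le : ∀ j ∈ B, ∑ i, 1 / (N : ℝ) * z i j ^ 2 ≤ ν := fun j hj => by
    rw [← mul_sum, sum_sq_eq_card_of_eq_zero_or_one fun i => hz01 i j, one_div_mul_eq_div,
      div_le_iff₀ (Nat.cast_pos.mpr hN)]
    exact hcol j hj
  exact fun w hw => stmt_6_general hβ hν lam (fun _ => by positivity) hLsmooth hone mean_sq_le hw
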